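/- Let X be a locally compact, CB-analysable topometric space and let μ be a regular Borel probability measure on X (Borel with respect to the topology of X). Then for every ε > 0 there is a set K ⊆ X with μ(K) > 1 − ε such that K is metrically compact, i.e. K is totally bounded and complete with respect to the metric d (equivalently, K is compact in the topology induced on it by d). -/

import Mathlib

open Set Topology NNReal ENNReal

/-- An extended metric on `X`: `d x y = 0` iff `x = y`, symmetric, triangle inequality. -/
def IsExtMetric {X : Type*} (d : X → X → ℝ≥0∞) : Prop :=
  (∀ x y, d x y = 0 ↔ x = y) ∧ (∀ x y, d x y = d y x) ∧ ∀ x y z, d x z ≤ d x y + d y z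

/-- The metric refines the topology. -/
def MetricRefines {X : Type*} [TopologicalSpace X] (d : X → X → ℝ≥0∞) : Prop :=
  ∀ U : Set X, IsOpen U → ∀ x ∈ U, ∃ r : ℝ≥0, 0 < r ∧ {y | d x y < (r : ℝ≥0∞)} ⊆ U

/-- The metric is lower semi-continuous: for every finite `r`,
`{(x,y) : d x y ≤ r}` is closed in the product topology. -/
def LowerSemiContinuousMetric {X : Type*} [TopologicalSpace X] (d : X → X → ℝ≥0∞) : Prop :=
  ∀ r : ℝ≥0, IsClosed {p : X × X | d p.1 p.2 ≤ (r : ℝ≥0∞)}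

/-- A topometric structure on a topological space. -/
def IsTopometric {X : Type*} [TopologicalSpace X] (d : X → X → ℝ≥0∞) : Prop :=
  IsExtMetric d ∧ MetricRefines d ∧ LowerSemiContinuousMetric d

/-- Distance from a point to a set (infimum over the set; `∞` when empty). -/
noncomputable def distToSet {X : Type*} (d : X → X → ℝ≥0∞) (x : X) (A : Set X) : ℝ≥0∞ :=
  ⨅ a ∈ A, d x a

/-- `A` has diameter at most `ε`. -/
def DiamLE {X : Type*} (d : X → X → ℝ≥0∞) (ε : ℝ≥0) (A : Set X) : Prop :=
  ∀ a ∈ A, ∀ b ∈ A, d a b ≤ (ε : ℝ≥0∞)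

/-- `A` is ε-n-finite: there are no points `a 0, …, a n ∈ A` pairwise at distance
`> ε`. -/
def EpsNFinite {X : Type*} (d : X → X → ℝ≥0∞) (ε : ℝ≥0) (n : ℕ) (A : Set X) : Prop :=
  ¬ ∃ a : Fin (n + 1) → X, (∀ i, a i ∈ A) ∧
    ∀ i j : Fin (n + 1), i < j → (ε : ℝ≥0∞) < d (a i) (a j)

/-- `A` is ε-finite: it is ε-n-finite for some `n`. -/
def EpsFinite {X : Type*} (d : X → X → ℝ≥0∞) (ε : ℝ≥0) (A : Set X) : Prop :=
  ∃ n : ℕ, EpsNFinite d ε n A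

/-- `V` is a relatively open subset of `Y`. -/
def RelOpenIn {X : Type*} [TopologicalSpace X] (Y V : Set X) : Prop :=
  ∃ U : Set X, IsOpen U ∧ V = U ∩ Y

/-- The Cantor–Bendixson derivative of `Y` associated with a smallness predicate `P`:
remove from `Y` the union of all relatively open subsets of `Y` satisfying `P`. -/
def cbDeriv {X : Type*} [TopologicalSpace X] (P : Set X → Prop) (Y : Set X) : Set X :=
  Y \ ⋃₀ {V : Set X | RelOpenIn Y V ∧ P V}

/-- The transfinite Cantor–Bendixson derivative sequence of a derivative operator `D`:
`univ` at `0`, apply `D` at successors, intersect at limits. -/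
noncomputable def cbSeq {X : Type*} (D : Set X → Set X) (o : Ordinal) : Set X :=
  Ordinal.limitRecOn o Set.univ (fun _ ih => D ih)
    (fun o _ ih => ⋂ (b : Ordinal) (h : b < o), ih b h)

/-- `X` is CB-analysable: for every `ε > 0`, some transfinite (d,ε)-Cantor–Bendixson
derivative of `X` is empty. -/
def CBAnalysable (X : Type*) [TopologicalSpace X] (d : X → X → ℝ≥0∞) : Prop :=
  ∀ ε : ℝ≥0, 0 < ε → ∃ α : Ordinal.{0}, cbSeq (cbDeriv (DiamLE d ε)) α = (∅ : Set X)

open MeasureTheory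

/-!
Fix `δ > 0` and call a set almost covered if, up to arbitrarily small measure, it is covered by
finitely many sets of diameter at most `δ`. By inner regularity the union `W` of all almost covered
open sets is almost covered. If `W` were not everything, some open `U` would meet `Wᶜ` with
`U ∩ Wᶜ` of diameter at most `δ`, since otherwise `Wᶜ` would survive every Cantor–Bendixson
derivative; then `U` is almost covered, so `U ⊆ W`, a contradiction. Lower semi-continuity lets the
covering sets be taken closed, and intersecting a compact set with such finite unions for `δ → 0`
gives a totally bounded set, which is complete because a topological cluster point of a Cauchy
sequence is a metric limit.
-/

section

variable {X : Type*} {d : X → X → ℝ≥0∞} {δ : ℝ≥0} {A B : Set X}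

/-- `K` is totally bounded for `d`, with the centres of the finite nets taken in `K`. -/
def MetricTotallyBounded (d : X → X → ℝ≥0∞) (K : Set X) : Prop :=
  ∀ r : ℝ≥0, 0 < r → ∃ S : Set X, S.Finite ∧ S ⊆ K ∧ K ⊆ ⋃ a ∈ S, {y | d a y < r}

/-- `K` is complete for `d`, expressed by sequences: every `d`-Cauchy sequence in `K` converges to
a point of `K` for `d`. -/
def MetricComplete (d : X → X → ℝ≥0∞) (K : Set X) : Prop :=
  ∀ x : ℕ → X, (∀ n, x n ∈ K) →
    (∀ δ : ℝ≥0, 0 < δ → ∃ N : ℕ, ∀ m ≥ N, ∀ n ≥ N, d (x m) (x n) < δ) →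
    ∃ a ∈ K, ∀ δ : ℝ≥0, 0 < δ → ∃ N : ℕ, ∀ n ≥ N, d a (x n) < δ

/-- `A` is covered by finitely many sets of `d`-diameter at most `δ`. The covering sets need not be
balls nor lie in `A`, so that the notion passes to subsets. -/
def FinitelyCovered (d : X → X → ℝ≥0∞) (δ : ℝ≥0) (A : Set X) : Prop :=
  ∃ 𝒯 : Set (Set X), 𝒯.Finite ∧ (∀ T ∈ 𝒯, DiamLE d δ T) ∧ A ⊆ ⋃₀ 𝒯

/-- `X` is fragmented by `d` (in the sense of Jayne and Rogers): every nonempty subset has nonempty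
relatively open subsets of arbitrarily small diameter. -/
def FragmentedBy (X : Type*) [TopologicalSpace X] (d : X → X → ℝ≥0∞) : Prop :=
  ∀ δ : ℝ≥0, 0 < δ → ∀ A : Set X, A.Nonempty →
    ∃ U, IsOpen U ∧ (U ∩ A).Nonempty ∧ DiamLE d δ (U ∩ A)

/-- Up to arbitrarily small `μ`-measure, `A` is covered by finitely many sets of `d`-diameter at
most `δ`. Neither `A` nor the covered sets are required to be measurable. -/
def AlmostFinitelyCovered [MeasurableSpace X] (d : X → X → ℝ≥0∞) (δ : ℝ≥0) (μ : Measure X)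
    (A : Set X) : Prop :=
  ∀ η : ℝ≥0∞, η ≠ 0 → ∃ B, FinitelyCovered d δ B ∧ μ (A \ B) < η

theorem DiamLE.mono (hB : DiamLE d δ B) (hAB : A ⊆ B) : DiamLE d δ A :=
  fun a ha b hb => hB a (hAB ha) b (hAB hb)

namespace FinitelyCovered

theorem of_diamLE (hA : DiamLE d δ A) : FinitelyCovered d δ A :=
  ⟨{A}, finite_singleton A, by simpa using hA, by simp⟩

theorem empty : FinitelyCovered d δ ∅ :=
  ⟨∅, finite_empty, by simp, empty_subset _⟩

theorem mono (hB : FinitelyCovered d δ B) (hAB : A ⊆ B) : FinitelyCovered d δ A :=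
  let ⟨𝒯, hfin, hdiam, hcov⟩ := hB
  ⟨𝒯, hfin, hdiam, hAB.trans hcov⟩

theorem union (hA : FinitelyCovered d δ A) (hB : FinitelyCovered d δ B) :
    FinitelyCovered d δ (A ∪ B) := by
  obtain ⟨𝒮, h𝒮fin, h𝒮diam, hA⟩ := hA
  obtain ⟨𝒯, h𝒯fin, h𝒯diam, hB⟩ := hB
  refine ⟨𝒮 ∪ 𝒯, h𝒮fin.union h𝒯fin, fun T hT => hT.elim (h𝒮diam T) (h𝒯diam T), ?_⟩
  rw [sUnion_union]
  exact union_subset_union hA hB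

end FinitelyCovered

theorem metricTotallyBounded_of_finitelyCovered
    (hA : ∀ r : ℝ≥0, 0 < r → ∃ δ < r, FinitelyCovered d δ A) : MetricTotallyBounded d A := by
  intro r hr
  obtain ⟨δ, hδr, 𝒯, hfin, hdiam, hcov⟩ := hA r hr
  obtain rfl | ⟨x₀, -⟩ := A.eq_empty_or_nonempty
  · exact ⟨∅, finite_empty, subset_rfl, empty_subset _⟩
  have : Nonempty X := ⟨x₀⟩
  choose! center hcenter using fun (T : Set X) (hT : (A ∩ T).Nonempty) => hT
  let 𝒯' := {T ∈ 𝒯 | (A ∩ T).Nonempty}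
  refine ⟨center '' 𝒯', (hfin.subset (sep_subset _ _)).image center, ?_, fun x hxA => ?_⟩
  · rintro _ ⟨T, ⟨-, hTA⟩, rfl⟩
    exact (hcenter T hTA).1
  · obtain ⟨T, hT, hxT⟩ := hcov hxA
    have hTA : (A ∩ T).Nonempty := ⟨x, hxA, hxT⟩
    exact mem_biUnion (mem_image_of_mem center ⟨hT, hTA⟩)
      ((hdiam T hT _ (hcenter T hTA).2 x hxT).trans_lt (ENNReal.coe_lt_coe.2 hδr))

section Topology

variable [TopologicalSpace X]

theorem t2Space_of_lowerSemiContinuousMetric (hd : ∀ x y, d x y = 0 ↔ x = y)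
    (hlsc : LowerSemiContinuousMetric d) : T2Space X := by
  have hdiag : diagonal X = {p | d p.1 p.2 ≤ (0 : ℝ≥0)} := by
    ext p
    simp [hd]
  rw [t2_iff_isClosed_diagonal, hdiag]
  exact hlsc 0

protected theorem DiamLE.closure (hlsc : LowerSemiContinuousMetric d) (hA : DiamLE d δ A) :
    DiamLE d δ (closure A) := by
  have hsub : _root_.closure (A ×ˢ A) ⊆ {p | d p.1 p.2 ≤ δ} :=
    closure_minimal (fun p hp => hA p.1 hp.1 p.2 hp.2) (hlsc δ)
  rw [closure_prod_eq] at hsub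
  exact fun a ha b hb => hsub (mk_mem_prod ha hb)

protected theorem FinitelyCovered.closure (hlsc : LowerSemiContinuousMetric d)
    (hA : FinitelyCovered d δ A) : FinitelyCovered d δ (closure A) := by
  obtain ⟨𝒯, hfin, hdiam, hcov⟩ := hA
  refine ⟨_root_.closure '' 𝒯, hfin.image _, ?_, ?_⟩
  · rintro _ ⟨T, hT, rfl⟩
    exact (hdiam T hT).closure hlsc
  · rw [sUnion_image, ← hfin.closure_biUnion, ← sUnion_eq_biUnion]
    exact closure_mono hcov

theorem metricComplete_of_isCompact (hlsc : LowerSemiContinuousMetric d) (hA : IsCompact A) :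
    MetricComplete d A := by
  intro x hxA hcauchy
  obtain ⟨a, haA, ha⟩ := hA.exists_mapClusterPt (f := Filter.atTop) (u := x)
    (Filter.tendsto_principal.2 (Filter.Eventually.of_forall hxA))
  refine ⟨a, haA, fun δ hδ => ?_⟩
  obtain ⟨N, hN⟩ := hcauchy (δ / 2) (half_pos hδ)
  refine ⟨N, fun n hn => ?_⟩
  have hclosed : IsClosed {y | d y (x n) ≤ (δ / 2 : ℝ≥0)} :=
    (hlsc (δ / 2)).preimage (Continuous.prodMk_left (x n))
  have hfreq : ∀ᶠ m in Filter.atTop, x m ∈ {y | d y (x n) ≤ (δ / 2 : ℝ≥0)} :=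
    Filter.eventually_atTop.2 ⟨N, fun m hm => (hN m hm n hn).le⟩
  have hmem : d a (x n) ≤ (δ / 2 : ℝ≥0) := hclosed.mem_of_mapClusterPt ha hfreq
  exact hmem.trans_lt (ENNReal.coe_lt_coe.2 (half_lt_self hδ))

end Topology

section CantorBendixson

theorem cbSeq_add_one (D : Set X → Set X) (o : Ordinal) :
    cbSeq D (o + 1) = D (cbSeq D o) :=
  Ordinal.limitRecOn_add_one _ _ _ _

theorem cbSeq_limit (D : Set X → Set X) {o : Ordinal} (ho : Order.IsSuccLimit o) :
    cbSeq D o = ⋂ b < o, cbSeq D b :=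
  Ordinal.limitRecOn_limit _ _ _ _ ho

theorem subset_cbSeq {D : Set X → Set X} (hA : ∀ Y, A ⊆ Y → A ⊆ D Y) (o : Ordinal) :
    A ⊆ cbSeq D o := by
  induction o using Ordinal.limitRecOn with
  | zero => simp [cbSeq]
  | add_one o ih =>
    rw [cbSeq_add_one]
    exact hA _ ih
  | limit o ho ih =>
    rw [cbSeq_limit D ho]
    exact subset_iInter₂ ih

variable [TopologicalSpace X]

theorem subset_cbDeriv {P : Set X → Prop} (hP : ∀ ⦃s t⦄, s ⊆ t → P t → P s)
    (hA : ∀ U, IsOpen U → P (U ∩ A) → ¬ (U ∩ A).Nonempty) {Y : Set X} (hAY : A ⊆ Y) :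
    A ⊆ cbDeriv P Y := by
  refine fun x hxA => ⟨hAY hxA, ?_⟩
  rintro ⟨_, ⟨⟨U, hU, rfl⟩, hPU⟩, hxU, -⟩
  exact hA U hU (hP (inter_subset_inter_right U hAY) hPU) ⟨x, hxU, hxA⟩

theorem CBAnalysable.fragmentedBy (h : CBAnalysable X d) : FragmentedBy X d := by
  intro δ hδ A hne
  by_contra! hA
  obtain ⟨α, hα⟩ := h δ hδ
  have hsub : A ⊆ cbSeq (cbDeriv (DiamLE d δ)) α :=
    subset_cbSeq (fun _ => subset_cbDeriv (fun _ _ hst ht => ht.mono hst)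
      fun U hU hdiam hne => hA U hU hne hdiam) α
  exact hne.ne_empty (subset_empty_iff.1 (hα ▸ hsub))

end CantorBendixson

section Measure

variable [MeasurableSpace X] {μ : Measure X}

theorem one_sub_lt_measure_of_measure_compl_lt [IsProbabilityMeasure μ] {ε : ℝ≥0∞}
    (hA : μ Aᶜ < min ε 1) : 1 - ε < μ A := by
  have hle : (1 : ℝ≥0∞) ≤ μ A + μ Aᶜ := by simpa using measure_univ_le_add_compl A (μ := μ)
  have hlt : (1 : ℝ≥0∞) < μ A + min ε 1 :=
    hle.trans_lt (ENNReal.add_lt_add_left (measure_ne_top μ A) hA)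
  calc 1 - ε ≤ 1 - min ε 1 := tsub_le_tsub_left (min_le_left ε 1) 1
    _ < μ A := ENNReal.sub_lt_of_lt_add (min_le_right ε 1) hlt

theorem FinitelyCovered.almostFinitelyCovered (hA : FinitelyCovered d δ A) :
    AlmostFinitelyCovered d δ μ A :=
  fun η hη => ⟨A, hA, by simpa using pos_iff_ne_zero.2 hη⟩

namespace AlmostFinitelyCovered

theorem mono (hB : AlmostFinitelyCovered d δ μ B) (hAB : A ⊆ B) :
    AlmostFinitelyCovered d δ μ A := fun η hη =>
  let ⟨C, hC, hμ⟩ := hB η hη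
  ⟨C, hC, (measure_mono (sdiff_subset_sdiff_left hAB)).trans_lt hμ⟩

theorem union (hA : AlmostFinitelyCovered d δ μ A) (hB : AlmostFinitelyCovered d δ μ B) :
    AlmostFinitelyCovered d δ μ (A ∪ B) := by
  intro η hη
  obtain ⟨C, hC, hAC⟩ := hA (η / 2) (ENNReal.half_pos hη).ne'
  obtain ⟨D, hD, hBD⟩ := hB (η / 2) (ENNReal.half_pos hη).ne'
  refine ⟨C ∪ D, hC.union hD, ?_⟩
  calc μ ((A ∪ B) \ (C ∪ D)) ≤ μ (A \ C ∪ B \ D) := measure_mono (by grind)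
    _ ≤ μ (A \ C) + μ (B \ D) := measure_union_le _ _
    _ < η / 2 + η / 2 := ENNReal.add_lt_add hAC hBD
    _ = η := ENNReal.add_halves η

theorem of_forall_exists_measure_sdiff_lt
    (hA : ∀ η : ℝ≥0∞, η ≠ 0 → ∃ B, AlmostFinitelyCovered d δ μ B ∧ μ (A \ B) < η) :
    AlmostFinitelyCovered d δ μ A := by
  intro η hη
  obtain ⟨B, hB, hAB⟩ := hA (η / 2) (ENNReal.half_pos hη).ne'
  obtain ⟨C, hC, hBC⟩ := hB (η / 2) (ENNReal.half_pos hη).ne'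
  refine ⟨C, hC, ?_⟩
  calc μ (A \ C) ≤ μ (A \ B ∪ B \ C) := measure_mono (by grind)
    _ ≤ μ (A \ B) + μ (B \ C) := measure_union_le _ _
    _ < η / 2 + η / 2 := ENNReal.add_lt_add hAB hBC
    _ = η := ENNReal.add_halves η

variable [TopologicalSpace X]

theorem of_isCompact_of_locally (hA : IsCompact A)
    (hloc : ∀ x ∈ A, ∃ t ∈ 𝓝[A] x, AlmostFinitelyCovered d δ μ t) :
    AlmostFinitelyCovered d δ μ A :=
  hA.induction_on FinitelyCovered.empty.almostFinitelyCovered (fun _ _ hst ht => ht.mono hst)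
    (fun _ _ hs ht => hs.union ht) hloc

variable [BorelSpace X] [R1Space X] [μ.InnerRegularCompactLTTop]

theorem of_locally (hA : MeasurableSet A) (hμA : μ A ≠ ∞)
    (hloc : ∀ x ∈ A, ∃ t ∈ 𝓝[A] x, AlmostFinitelyCovered d δ μ t) :
    AlmostFinitelyCovered d δ μ A := by
  refine of_forall_exists_measure_sdiff_lt fun η hη => ?_
  obtain ⟨K, hKA, hK, -, hμK⟩ := hA.exists_isCompact_isClosed_sdiff_lt hμA hη
  refine ⟨K, of_isCompact_of_locally hK fun x hx => ?_, hμK⟩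
  obtain ⟨t, ht, htcov⟩ := hloc x (hKA hx)
  exact ⟨t, nhdsWithin_mono x hKA ht, htcov⟩

end AlmostFinitelyCovered

variable [TopologicalSpace X]

theorem innerRegular_of_forall_eq_iSup
    (hμ : ∀ S, MeasurableSet S → μ S = ⨆ (K : Set X) (_ : IsCompact K ∧ K ⊆ S), μ K) :
    μ.InnerRegular where
  innerRegular S hS r hr := by
    rw [hμ S hS] at hr
    simp only [lt_iSup_iff] at hr
    obtain ⟨K, ⟨hK, hKS⟩, hrK⟩ := hr
    exact ⟨K, hKS, hK, hrK⟩

theorem AlmostFinitelyCovered.exists_isClosed (hlsc : LowerSemiContinuousMetric d)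
    (h : AlmostFinitelyCovered d δ μ univ) {η : ℝ≥0∞} (hη : η ≠ 0) :
    ∃ B, IsClosed B ∧ FinitelyCovered d δ B ∧ μ Bᶜ < η := by
  obtain ⟨B, hB, hμB⟩ := h η hη
  rw [← compl_eq_univ_sdiff] at hμB
  exact ⟨closure B, isClosed_closure, hB.closure hlsc,
    (measure_mono (compl_subset_compl.2 subset_closure)).trans_lt hμB⟩

variable [BorelSpace X] [R1Space X] [IsFiniteMeasure μ] [μ.InnerRegularCompactLTTop]

theorem FragmentedBy.almostFinitelyCovered_univ (hfrag : FragmentedBy X d) (hδ : 0 < δ) :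
    AlmostFinitelyCovered d δ μ univ := by
  let W : Set X := ⋃₀ {U | IsOpen U ∧ AlmostFinitelyCovered d δ μ U}
  have hWopen : IsOpen W := isOpen_sUnion fun U hU => hU.1
  have hWcov : AlmostFinitelyCovered d δ μ W := by
    refine .of_locally hWopen.measurableSet (measure_ne_top μ W) ?_
    rintro x ⟨U, ⟨hU, hUcov⟩, hxU⟩
    exact ⟨U, mem_nhdsWithin_of_mem_nhds (hU.mem_nhds hxU), hUcov⟩
  suffices W = univ from this ▸ hWcov
  by_contra hne
  obtain ⟨U, hU, ⟨x, hxU, hxW⟩, hdiam⟩ := hfrag δ hδ Wᶜ (nonempty_compl.2 hne)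
  have hUcov : AlmostFinitelyCovered d δ μ U :=
    ((FinitelyCovered.of_diamLE hdiam).almostFinitelyCovered.union hWcov).mono (by grind)
  exact hxW ⟨U, ⟨hU, hUcov⟩, hxU⟩

end Measure

end

theorem stmt_19_general {X : Type*} [TopologicalSpace X] [R1Space X] [MeasurableSpace X]
    [BorelSpace X] (d : X → X → ℝ≥0∞) (hlsc : LowerSemiContinuousMetric d)
    (hfrag : FragmentedBy X d) (μ : Measure X) [IsFiniteMeasure μ] [μ.InnerRegularCompactLTTop]
    {ε : ℝ≥0∞} (hε : ε ≠ 0) :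
    ∃ K, μ Kᶜ < ε ∧ MetricTotallyBounded d K ∧ MetricComplete d K := by
  have hε2 : ε / 2 ≠ 0 := (ENNReal.half_pos hε).ne'
  obtain ⟨F, -, hF, -, hμF⟩ :=
    MeasurableSet.univ.exists_isCompact_isClosed_sdiff_lt (measure_ne_top μ univ) hε2
  rw [← compl_eq_univ_sdiff] at hμF
  obtain ⟨η, hηpos, hηsum⟩ := ENNReal.exists_pos_sum_of_countable' hε2 ℕ
  obtain ⟨δ, -, hδpos, hδlim⟩ := exists_seq_strictAnti_tendsto (0 : ℝ≥0)
  choose B hBclosed hBcov hμB using fun n =>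
    (hfrag.almostFinitelyCovered_univ (μ := μ) (hδpos n)).exists_isClosed hlsc (hηpos n).ne'
  refine ⟨F ∩ ⋂ n, B n, ?_, metricTotallyBounded_of_finitelyCovered fun r hr => ?_,
    metricComplete_of_isCompact hlsc (hF.inter_right (isClosed_iInter hBclosed))⟩
  · calc μ (F ∩ ⋂ n, B n)ᶜ = μ (Fᶜ ∪ ⋃ n, (B n)ᶜ) := by rw [compl_inter, compl_iInter]
      _ ≤ μ Fᶜ + ∑' n, μ (B n)ᶜ :=
        (measure_union_le _ _).trans (add_le_add_right (measure_iUnion_le _) _)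
      _ ≤ μ Fᶜ + ∑' n, η n := by gcongr with n; exact (hμB n).le
      _ < ε / 2 + ε / 2 := ENNReal.add_lt_add hμF hηsum
      _ = ε := ENNReal.add_halves ε
  · obtain ⟨n, hn⟩ := (hδlim.eventually_lt_const hr).exists
    exact ⟨δ n, hn, (hBcov n).mono (inter_subset_right.trans (iInter_subset B n))⟩

/-- on a locally compact CB-analysable topometric space, a regular Borel
probability measure has, for every `ε > 0`, a set of measure `> 1 - ε` which is
metrically compact (totally bounded and complete for the metric `d`). -/
theorem stmt_19 {X : Type*} [TopologicalSpace X] [LocallyCompactSpace X]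
    [MeasurableSpace X] [BorelSpace X]
    (d : X → X → ℝ≥0∞) (htm : IsTopometric d) (han : CBAnalysable X d)
    (μ : Measure X) (hprob : IsProbabilityMeasure μ)
    (hreg : ∀ S : Set X, MeasurableSet S →
      (μ S = ⨆ (K : Set X) (_ : IsCompact K ∧ K ⊆ S), μ K) ∧
      (μ S = ⨅ (U : Set X) (_ : IsOpen U ∧ S ⊆ U), μ U)) :
    ∀ ε : ℝ≥0, 0 < ε → ∃ K : Set X,
      1 - (ε : ℝ≥0∞) < μ K ∧
      (∀ r : ℝ≥0, 0 < r → ∃ S : Set X, S.Finite ∧ S ⊆ K ∧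
        K ⊆ ⋃ a ∈ S, {y : X | d a y < (r : ℝ≥0∞)}) ∧
      (∀ x : ℕ → X, (∀ n, x n ∈ K) →
        (∀ δ : ℝ≥0, 0 < δ → ∃ N : ℕ, ∀ m ≥ N, ∀ n ≥ N, d (x m) (x n) < (δ : ℝ≥0∞)) →
        ∃ a ∈ K, ∀ δ : ℝ≥0, 0 < δ → ∃ N : ℕ, ∀ n ≥ N, d a (x n) < (δ : ℝ≥0∞)) := by
  intro ε hε
  have : T2Space X := t2Space_of_lowerSemiContinuousMetric htm.1.1 htm.2.2
  have : μ.InnerRegular := innerRegular_of_forall_eq_iSup fun S hS => (hreg S hS).1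
  obtain ⟨K, hμK, hK⟩ :=
    stmt_19_general d htm.2.2 han.fragmentedBy μ (ε := min ε 1) (by positivity)
  exact ⟨K, one_sub_lt_measure_of_measure_compl_lt hμK, hK⟩
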